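/- (Quantitative wedge-of-the-edge theorem.) There exist universal constants δ > 0 and ε > 0 (independent of the dimension d) with the following property: let d ≥ 1 and let (h_n)_{n≥0} be a sequence of polynomials in d variables with complex coefficients such that each h_n is homogeneous of degree n, and suppose that Σ_{n=0}^∞ |h_n(x)| ≤ 1 for every x ∈ [0,1]^d. Then for every z ∈ ℂ^d with ‖z‖ < δ the series Σ_{n=0}^∞ h_n(z) converges, the resulting function is analytic on the complex ball B_ℂ(0,δ) ⊆ ℂ^d, and it is bounded in modulus by ε there. -/

import Mathlib

/-!
The bound on the cube propagates to the complex polydisc of radius `1 / 4` with no loss. Through a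
point `z` of this polydisc passes the analytic disc `φ(u) = z + u / 2 + u² z̄`. For `|u| = 1` we
have `φ(u) = u • (1 / 2 + 2 Re (u z̄))`, a unimodular multiple of a point of the real cube, so
homogeneity gives `|h_n(φ(u))| = |h_n(1 / 2 + 2 Re (u z̄))|`, and the maximum principle for the
`ℓ¹`-valued holomorphic function `u ↦ (h_n(φ(u)))_n` yields `∑ |h_n(z)| ≤ 1`.

Cauchy's estimates on the polydisc then bound the coefficients of `h_n` by `4 ^ n`. As `h_n` has
only polynomially many monomials in `n`, the associated power series has radius of convergence at
least `1 / 4`, whence analyticity.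
-/

open Complex ComplexConjugate Finset MeasureTheory MvPolynomial
open scoped ENNReal NNReal

section MaximumPrinciple

variable {κ E F : Type*} [NormedAddCommGroup E] [NormedSpace ℂ E] [Nontrivial E]
  [NormedAddCommGroup F] [NormedSpace ℂ F]

theorem sum_norm_le_of_forall_mem_frontier_sum_norm_le {s : Finset κ} {f : κ → E → F} {U : Set E}
    (hU : Bornology.IsBounded U) (hf : ∀ k, DiffContOnCl ℂ (f k) U) {C : ℝ}
    (hC : ∀ z ∈ frontier U, ∑ k ∈ s, ‖f k z‖ ≤ C) {z : E} (hz : z ∈ closure U) :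
    ∑ k ∈ s, ‖f k z‖ ≤ C := by
  -- An `ℓ¹`-sum of norms is the norm of a single holomorphic map into `PiLp 1`.
  let G (w : E) : PiLp 1 fun _ : s ↦ F := WithLp.toLp 1 fun k ↦ f k w
  have norm_G (w : E) : ‖G w‖ = ∑ k ∈ s, ‖f k w‖ := by
    rw [PiLp.norm_eq_of_L1, ← sum_coe_sort s]
  have hG : DiffContOnCl ℂ G U :=
    ⟨(differentiableOn_piLp 1).2 fun k ↦ (hf k).differentiableOn,
      (PiLp.continuous_toLp 1 _).comp_continuousOn
        (continuousOn_pi.2 fun k ↦ (hf k).continuousOn)⟩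
  simp only [← norm_G] at hC ⊢
  exact norm_le_of_forall_mem_frontier_norm_le hU hG hC hz

end MaximumPrinciple

section HomogeneousPolynomials

variable {ι R : Type*} [CommSemiring R] {n : ℕ} {g : MvPolynomial ι R}

theorem eval_smul_of_isHomogeneous (hg : g.IsHomogeneous n) (t : R) (z : ι → R) :
    eval (t • z) g = t ^ n * eval z g := by
  rw [eval_eq, eval_eq, mul_sum]
  refine sum_congr rfl fun α hα ↦ ?_
  simp only [Pi.smul_apply, smul_eq_mul, mul_pow, prod_mul_distrib, prod_pow_eq_pow_sum,
    ← hg.degree_eq_sum_deg_support hα]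
  ring

theorem card_support_le_multichoose_of_isHomogeneous [Fintype ι] (hg : g.IsHomogeneous n) :
    #g.support ≤ (Fintype.card ι).multichoose n := by
  classical
  rw [← card_univ, ← card_finsuppAntidiag_nat_eq_multichoose]
  refine card_le_card fun α hα ↦ mem_finsuppAntidiag.2 ⟨?_, subset_univ _⟩
  rw [← Finsupp.degree_eq_sum, hg.degree_eq_sum_deg_support hα, Finsupp.degree_apply]

end HomogeneousPolynomials

section CubeToPolydisc

variable {ι κ : Type*}

/-- The analytic disc `u ↦ z + u / 2 + u² z̄` in `ℂ^ι`, with centre `z`. The coefficients are chosen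
so that, for `|u| = 1`, the point `u⁻¹ • edgeDisc z u` is real, and lies in the unit cube as soon as
`|z i| ≤ 1 / 4`. -/
noncomputable def edgeDisc (z : ι → ℂ) (u : ℂ) : ι → ℂ :=
  fun i ↦ z i + u / 2 + u ^ 2 * conj (z i)

theorem edgeDisc_zero (z : ι → ℂ) : edgeDisc z 0 = z := by
  ext i
  simp [edgeDisc]

theorem edgeDisc_eq_smul_of_norm_eq_one (z : ι → ℂ) {u : ℂ} (hu : ‖u‖ = 1) :
    edgeDisc z u = u • fun i ↦ ((1 / 2 + 2 * (u * conj (z i)).re : ℝ) : ℂ) := by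
  have huu : u * conj u = 1 := by simp [mul_conj, normSq_eq_norm_sq, hu]
  ext i
  have hre := add_conj (u * conj (z i))
  rw [map_mul, conj_conj] at hre
  rw [Pi.smul_apply, smul_eq_mul, ofReal_add, ← hre, edgeDisc]
  push_cast
  linear_combination -(z i) * huu

theorem differentiable_eval_edgeDisc (g : MvPolynomial ι ℂ) (z : ι → ℂ) :
    Differentiable ℂ fun u ↦ eval (edgeDisc z u) g := by
  simp only [eval_eq, edgeDisc]
  fun_prop

theorem sum_norm_eval_le_of_unit_cube {s : Finset κ} {g : κ → MvPolynomial ι ℂ} {m : κ → ℕ}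
    (hg : ∀ k, (g k).IsHomogeneous (m k)) {M : ℝ}
    (hM : ∀ x : ι → ℝ, (∀ i, x i ∈ Set.Icc (0 : ℝ) 1) →
      ∑ k ∈ s, ‖eval (fun i ↦ (x i : ℂ)) (g k)‖ ≤ M)
    {z : ι → ℂ} (hz : ∀ i, ‖z i‖ ≤ 1 / 4) :
    ∑ k ∈ s, ‖eval z (g k)‖ ≤ M := by
  have boundary : ∀ u ∈ frontier (Metric.ball (0 : ℂ) 1),
      ∑ k ∈ s, ‖eval (edgeDisc z u) (g k)‖ ≤ M := by
    intro u hu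
    rw [frontier_ball _ one_ne_zero, mem_sphere_zero_iff_norm] at hu
    simp only [edgeDisc_eq_smul_of_norm_eq_one z hu, eval_smul_of_isHomogeneous (hg _), norm_mul,
      norm_pow, hu, one_pow, one_mul]
    refine hM _ fun i ↦ ?_
    have hre : |(u * conj (z i)).re| ≤ 1 / 4 := by
      refine (abs_re_le_norm _).trans ?_
      simpa [hu] using hz i
    constructor <;> linarith [abs_le.1 hre]
  have center := sum_norm_le_of_forall_mem_frontier_sum_norm_le Metric.isBounded_ball
    (fun k ↦ (differentiable_eval_edgeDisc (g k) z).diffContOnCl) boundary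
    (subset_closure (Metric.mem_ball_self one_pos))
  simpa only [edgeDisc_zero] using center

end CubeToPolydisc

section CauchyEstimate

theorem norm_continuousMap_toLp_le {X 𝕜 F : Type*} [TopologicalSpace X] [CompactSpace X]
    [MeasurableSpace X] [BorelSpace X] [NontriviallyNormedField 𝕜] [NormedAddCommGroup F]
    [NormedSpace 𝕜 F] [SecondCountableTopologyEither X F] (μ : Measure X) [IsProbabilityMeasure μ]
    (p : ℝ≥0∞) [Fact (1 ≤ p)] (f : C(X, F)) :
    ‖f.toLp p μ 𝕜‖ ≤ ‖f‖ := by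
  simpa [measureUnivNNReal] using
    ContinuousLinearMap.le_of_opNorm_le _ (ContinuousMap.toLp_norm_le (E := F) (𝕜 := 𝕜) μ) f

-- Mathlib states multivariate Fourier theory for the normalised Haar measure, which is not the
-- global `MeasureSpace` instance on the circle.
attribute [local instance] instMeasureSpaceUnitAddCircle
  instIsProbabilityMeasureUnitAddCircleVolume

variable {ι κ : Type*} [Fintype ι]

theorem norm_le_norm_sum_smul_mFourier {s : Finset κ} {e : κ → ι → ℤ} (he : e.Injective)
    (c : κ → ℂ) {k : κ} (hk : k ∈ s) :
    ‖c k‖ ≤ ‖∑ l ∈ s, c l • UnitAddTorus.mFourier (e l)‖ := by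
  set f := ∑ l ∈ s, c l • UnitAddTorus.mFourier (e l) with hf
  have orthonormal := UnitAddTorus.orthonormal_mFourier.comp e he
  have coeff_eq : inner ℂ (UnitAddTorus.mFourierLp 2 (e k)) (f.toLp 2 volume ℂ) = c k := by
    rw [hf, map_sum]
    simp only [map_smul]
    exact orthonormal.inner_right_sum c hk
  calc ‖c k‖ = ‖inner ℂ (UnitAddTorus.mFourierLp 2 (e k)) (f.toLp 2 volume ℂ)‖ := by
        rw [coeff_eq]
    _ ≤ ‖UnitAddTorus.mFourierLp 2 (e k)‖ * ‖f.toLp 2 volume ℂ‖ := norm_inner_le_norm _ _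
    _ = ‖f.toLp 2 volume ℂ‖ := by rw [UnitAddTorus.orthonormal_mFourier.1, one_mul]
    _ ≤ ‖f‖ := norm_continuousMap_toLp_le _ _ f

theorem norm_coeff_mul_prod_pow_le (g : MvPolynomial ι ℂ) {r : ι → ℝ} (hr : ∀ i, 0 ≤ r i) {M : ℝ}
    (hM : ∀ z : ι → ℂ, (∀ i, ‖z i‖ = r i) → ‖eval z g‖ ≤ M) (α : ι →₀ ℕ) :
    ‖g.coeff α‖ * ∏ i, r i ^ α i ≤ M := by
  have hM₀ : 0 ≤ M :=
    (norm_nonneg _).trans (hM (fun i ↦ (r i : ℂ)) fun i ↦ Complex.norm_of_nonneg (hr i))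
  by_cases hα : α ∈ g.support
  · let c (β : ι →₀ ℕ) : ℂ := g.coeff β * ∏ i, (r i : ℂ) ^ β i
    let e (β : ι →₀ ℕ) : ι → ℤ := fun i ↦ β i
    have he : e.Injective := fun β γ h ↦ Finsupp.ext fun i ↦ by simpa [e] using congr_fun h i
    have apply_eq_eval (t : UnitAddTorus ι) :
        (∑ β ∈ g.support, c β • UnitAddTorus.mFourier (e β)) t =
          eval (fun i ↦ (r i : ℂ) * AddCircle.toCircle (t i)) g := by
      simp [c, e, eval_eq', UnitAddTorus.mFourier, mul_pow, prod_mul_distrib, mul_assoc,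
        AddCircle.toCircle_nsmul]
    calc ‖g.coeff α‖ * ∏ i, r i ^ α i = ‖c α‖ := by
          simp [c, abs_of_nonneg (hr _)]
      _ ≤ ‖∑ β ∈ g.support, c β • UnitAddTorus.mFourier (e β)‖ :=
          norm_le_norm_sum_smul_mFourier he c hα
      _ ≤ M := by
          refine (ContinuousMap.norm_le _ hM₀).2 fun t ↦ ?_
          rw [apply_eq_eval]
          exact hM _ fun i ↦ by simp [Circle.norm_coe, abs_of_nonneg (hr i)]
  · simpa [notMem_support_iff.1 hα] using hM₀

theorem sum_norm_coeff_mul_pow_le {g : MvPolynomial ι ℂ} {n : ℕ} (hg : g.IsHomogeneous n)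
    {ρ : ℝ≥0} {M : ℝ} (hM : ∀ z : ι → ℂ, (∀ i, ‖z i‖ = ρ) → ‖eval z g‖ ≤ M) :
    (∑ α ∈ g.support, ‖g.coeff α‖) * ρ ^ n ≤ (Fintype.card ι).multichoose n * M := by
  have hM₀ : 0 ≤ M := (norm_nonneg _).trans (hM (fun _ ↦ (ρ : ℝ)) fun _ ↦ by simp)
  have coeff_le (α) (hα : α ∈ g.support) : ‖g.coeff α‖ * ρ ^ n ≤ M := by
    have := norm_coeff_mul_prod_pow_le g (fun _ ↦ ρ.coe_nonneg) hM α
    rwa [prod_pow_eq_pow_sum, ← Finsupp.degree_eq_sum, Finsupp.degree_apply,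
      ← hg.degree_eq_sum_deg_support hα] at this
  calc (∑ α ∈ g.support, ‖g.coeff α‖) * ρ ^ n = ∑ α ∈ g.support, ‖g.coeff α‖ * ρ ^ n := sum_mul ..
    _ ≤ #g.support * M := by simpa using sum_le_card_nsmul _ _ _ coeff_le
    _ ≤ (Fintype.card ι).multichoose n * M := by
        gcongr
        exact card_support_le_multichoose_of_isHomogeneous hg

end CauchyEstimate

section PowerSeries

variable {𝕜 E ι : Type*} [NontriviallyNormedField 𝕜] [NormedAddCommGroup E] [NormedSpace 𝕜 E]
  {n : ℕ} {ℓ : ι → E →L[𝕜] 𝕜}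

theorem exists_multilinear_diag_eq_prod_pow (hℓ : ∀ i, ‖ℓ i‖ ≤ 1) {α : ι →₀ ℕ}
    (hα : α.degree = n) :
    ∃ p : E [×n]→L[𝕜] 𝕜, (∀ z, (p fun _ ↦ z) = ∏ i ∈ α.support, ℓ i z ^ α i) ∧ ‖p‖ ≤ 1 := by
  obtain ⟨e⟩ : Nonempty (Fin n ≃ Σ i : α.support, Fin (α i)) := by
    refine Fintype.card_eq.1 ?_
    simp only [Fintype.card_sigma, Fintype.card_fin]
    rw [sum_coe_sort α.support, ← Finsupp.degree_apply, hα]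
  refine ⟨(ContinuousMultilinearMap.mkPiAlgebra 𝕜 (Fin n) 𝕜).compContinuousLinearMap
    fun j ↦ ℓ (e j).1, fun z ↦ ?_, ?_⟩
  · simp only [ContinuousMultilinearMap.compContinuousLinearMap_apply,
      ContinuousMultilinearMap.mkPiAlgebra_apply]
    rw [e.prod_comp fun j ↦ ℓ j.1 z, Fintype.prod_sigma]
    simp only [prod_const, card_univ, Fintype.card_fin]
    exact prod_coe_sort α.support fun i ↦ ℓ i z ^ α i
  · refine (ContinuousMultilinearMap.norm_compContinuousLinearMap_le _ _).trans ?_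
    rw [ContinuousMultilinearMap.norm_mkPiAlgebra, one_mul]
    exact prod_le_one (fun _ _ ↦ norm_nonneg _) fun j _ ↦ hℓ _

theorem exists_multilinear_diag_eq_eval (hℓ : ∀ i, ‖ℓ i‖ ≤ 1) {g : MvPolynomial ι 𝕜}
    (hg : g.IsHomogeneous n) :
    ∃ p : E [×n]→L[𝕜] 𝕜, (∀ z, (p fun _ ↦ z) = eval (fun i ↦ ℓ i z) g) ∧
      ‖p‖ ≤ ∑ α ∈ g.support, ‖g.coeff α‖ := by
  choose! p p_diag norm_p_le using fun (α : ι →₀ ℕ) (hα : α ∈ g.support) ↦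
    exists_multilinear_diag_eq_prod_pow hℓ (hg.degree_eq_sum_deg_support hα).symm
  refine ⟨∑ α ∈ g.support, g.coeff α • p α, fun z ↦ ?_, norm_sum_le_of_le _ fun α hα ↦ ?_⟩
  · rw [_root_.sum_apply, eval_eq]
    exact sum_congr rfl fun α hα ↦ by simp [p_diag α hα]
  · rw [norm_smul]
    exact mul_le_of_le_one_right (norm_nonneg _) (norm_p_le α hα)

theorem le_radius_of_norm_mul_pow_le_multichoose {F : Type*} [NormedAddCommGroup F]
    [NormedSpace 𝕜 F] {P : FormalMultilinearSeries 𝕜 E F} {ρ : ℝ≥0} {M : ℝ} {d : ℕ}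
    (hP : ∀ n, ‖P n‖ * ρ ^ n ≤ d.multichoose n * M) :
    ρ ≤ P.radius := by
  refine ENNReal.le_of_forall_nnreal_lt fun r hr ↦ ?_
  have hrρ : (r : ℝ) < ρ := mod_cast hr
  have hρ : (0 : ℝ) < ρ := r.coe_nonneg.trans_lt hrρ
  have hM : 0 ≤ M := (norm_nonneg (P 0)).trans (by simpa using hP 0)
  have multichoose_le (n : ℕ) : d.multichoose n ≤ (n + d).choose d := by
    rw [Nat.multichoose_eq, ← Nat.choose_symm_add, add_comm n]
    exact Nat.choose_le_choose n (Nat.sub_le _ _)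
  have ratio_lt_one : ‖(r / ρ : ℝ)‖ < 1 := by
    rwa [Real.norm_of_nonneg (by positivity), div_lt_one hρ]
  refine P.le_radius_of_summable <| .of_nonneg_of_le (fun n ↦ by positivity) (fun n ↦ ?_)
    ((summable_choose_mul_geometric_of_norm_lt_one d ratio_lt_one).mul_left M)
  calc ‖P n‖ * r ^ n = ‖P n‖ * ρ ^ n * (r / ρ) ^ n := by
        rw [mul_assoc, ← mul_pow, mul_div_cancel₀ _ hρ.ne']
    _ ≤ (n + d).choose d * M * (r / ρ) ^ n := by
        refine mul_le_mul_of_nonneg_right ((hP n).trans ?_) (by positivity)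
        exact mul_le_mul_of_nonneg_right (mod_cast multichoose_le n) hM
    _ = M * ((n + d).choose d * (r / ρ) ^ n) := by ring

end PowerSeries

theorem analyticOnNhd_tsum_eval {ι E : Type*} [Finite ι] [NormedAddCommGroup E] [NormedSpace ℂ E]
    {ℓ : ι → E →L[ℂ] ℂ} (hℓ : ∀ i, ‖ℓ i‖ ≤ 1) {h : ℕ → MvPolynomial ι ℂ}
    (hh : ∀ n, (h n).IsHomogeneous n) {ρ : ℝ≥0} {M : ℝ}
    (hM : ∀ n, ∀ z : ι → ℂ, (∀ i, ‖z i‖ = ρ) → ‖eval z (h n)‖ ≤ M) :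
    AnalyticOnNhd ℂ (fun z ↦ ∑' n, eval (fun i ↦ ℓ i z) (h n)) (Metric.ball 0 ρ) := by
  cases nonempty_fintype ι
  choose P P_diag norm_P_le using fun n ↦ exists_multilinear_diag_eq_eval hℓ (hh n)
  have radius_ge : ρ ≤ FormalMultilinearSeries.radius P :=
    le_radius_of_norm_mul_pow_le_multichoose fun n ↦
      (mul_le_mul_of_nonneg_right (norm_P_le n) (by positivity)).trans
        (sum_norm_coeff_mul_pow_le (hh n) (hM n))
  have sum_eq : FormalMultilinearSeries.sum P = fun z ↦ ∑' n, eval (fun i ↦ ℓ i z) (h n) :=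
    funext fun z ↦ tsum_congr fun n ↦ P_diag n z
  rw [← sum_eq, ← Metric.eball_coe]
  exact FormalMultilinearSeries.analyticOnNhd.mono (Metric.eball_subset_eball radius_ge)

theorem quantitative_wedge_of_the_edge_general {ι : Type*} [Fintype ι] (p : ℝ≥0∞) [Fact (1 ≤ p)]
    {h : ℕ → MvPolynomial ι ℂ} (hh : ∀ n, (h n).IsHomogeneous n) {M : ℝ}
    (hM : ∀ x : ι → ℝ, (∀ i, x i ∈ Set.Icc (0 : ℝ) 1) →
      ∀ N : ℕ, ∑ n ∈ range N, ‖eval (fun i ↦ (x i : ℂ)) (h n)‖ ≤ M) :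
    (∀ z : PiLp p fun _ : ι ↦ ℂ, ‖z‖ < 1 / 4 → Summable fun n ↦ eval (fun i ↦ z i) (h n)) ∧
    AnalyticOnNhd ℂ (fun z : PiLp p fun _ : ι ↦ ℂ ↦ ∑' n, eval (fun i ↦ z i) (h n))
      (Metric.ball 0 (1 / 4)) ∧
    ∀ z : PiLp p fun _ : ι ↦ ℂ, ‖z‖ < 1 / 4 → ‖∑' n, eval (fun i ↦ z i) (h n)‖ ≤ M := by
  have sum_le (z : ι → ℂ) (hz : ∀ i, ‖z i‖ ≤ 1 / 4) (N : ℕ) :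
      ∑ n ∈ range N, ‖eval z (h n)‖ ≤ M :=
    sum_norm_eval_le_of_unit_cube hh (hM · · N) hz
  have coord_le (z : PiLp p fun _ : ι ↦ ℂ) (hz : ‖z‖ < 1 / 4) (i : ι) : ‖z i‖ ≤ 1 / 4 :=
    (PiLp.norm_apply_le z i).trans hz.le
  have summable_norm (z : PiLp p fun _ : ι ↦ ℂ) (hz : ‖z‖ < 1 / 4) :
      Summable fun n ↦ ‖eval (fun i ↦ z i) (h n)‖ :=
    summable_of_sum_range_le (fun _ ↦ norm_nonneg _) (sum_le _ (coord_le z hz))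
  have norm_proj_le (i : ι) : ‖PiLp.proj (𝕜 := ℂ) p (fun _ : ι ↦ ℂ) i‖ ≤ 1 :=
    ContinuousLinearMap.opNorm_le_bound _ zero_le_one fun z ↦ by
      simpa using PiLp.norm_apply_le z i
  have term_le (n : ℕ) (z : ι → ℂ) (hz : ∀ i, ‖z i‖ = (1 / 4 : ℝ≥0)) : ‖eval z (h n)‖ ≤ M :=
    (single_le_sum (f := fun n ↦ ‖eval z (h n)‖) (fun _ _ ↦ norm_nonneg _)
      (self_mem_range_succ n)).trans (sum_le z (fun i ↦ by simp [hz i]) (n + 1))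
  refine ⟨fun z hz ↦ (summable_norm z hz).of_norm, ?_, fun z hz ↦ ?_⟩
  · simpa using analyticOnNhd_tsum_eval norm_proj_le hh term_le
  · exact (norm_tsum_le_tsum_norm (summable_norm z hz)).trans
      (Real.tsum_le_of_sum_range_le (fun _ ↦ norm_nonneg _) (sum_le _ (coord_le z hz)))

/-- The quantitative wedge-of-the-edge theorem: there are universal (dimension
independent) constants `δ, ε > 0` such that any series of homogeneous polynomials
whose sum of moduli is bounded by `1` on the unit cube `[0,1]^d` defines an
analytic function on the complex ball of radius `δ` which is bounded by `ε` there. -/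
theorem quantitative_wedge_of_the_edge :
    ∃ δ ε : ℝ, 0 < δ ∧ 0 < ε ∧
      ∀ (d : ℕ), 1 ≤ d →
        ∀ h : ℕ → MvPolynomial (Fin d) ℂ,
          (∀ n, (h n).IsHomogeneous n) →
          (∀ x : Fin d → ℝ, (∀ i, x i ∈ Set.Icc (0 : ℝ) 1) →
            ∀ N : ℕ, ∑ n ∈ Finset.range N,
              ‖MvPolynomial.eval (fun i => (x i : ℂ)) (h n)‖ ≤ 1) →
          (∀ z : EuclideanSpace ℂ (Fin d), ‖z‖ < δ →
            Summable fun n => MvPolynomial.eval (fun i => z i) (h n)) ∧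
          AnalyticOnNhd ℂ
            (fun z : EuclideanSpace ℂ (Fin d) =>
              ∑' n, MvPolynomial.eval (fun i => z i) (h n))
            (Metric.ball 0 δ) ∧
          (∀ z : EuclideanSpace ℂ (Fin d), ‖z‖ < δ →
            ‖∑' n, MvPolynomial.eval (fun i => z i) (h n)‖ ≤ ε) :=
  ⟨1 / 4, 1, by norm_num, one_pos, fun _ _ _ hh hM ↦
    quantitative_wedge_of_the_edge_general 2 hh hM⟩
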